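/- arXiv:1907.04705 — 2 statements merged into one kernel-verified Lean document; each statement's English description precedes it below -/
import Mathlib

section
/- (Power balance of the Euler–Bernoulli beam with distributed force.) Let $\rho A, EI > 0$ be constants, $L>0$, let $f:\mathbb{R}\times[0,L]\to\mathbb{R}$ be smooth, and let $w:\mathbb{R}\times[0,L]\to\mathbb{R}$ be a smooth solution of $\rho A\,\ddot{w} = -EI\,w_{[4]} + f$ satisfying the free-end boundary conditions $w_{[2]}(t,0) = w_{[3]}(t,0) = w_{[2]}(t,L) = w_{[3]}(t,L) = 0$ for all $t$. Then the total energy $\mathscr{H}(t) = \int_0^L\Big(\frac{\rho A}{2}\dot{w}^2 + \frac{EI}{2}w_{[2]}^2\Big)dz$ satisfies $\frac{d\mathscr{H}}{dt}(t) = \int_0^L f(t,z)\,\dot{w}(t,z)\,dz$ for all $t$. -/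
open MeasureTheory

/-- Time derivative of a field `f(t,z)`. -/
noncomputable def pT (f : ℝ → ℝ → ℝ) : ℝ → ℝ → ℝ := fun t z => deriv (fun s => f s z) t

/-- Spatial derivative of a field `f(t,z)`. -/
noncomputable def pZ (f : ℝ → ℝ → ℝ) : ℝ → ℝ → ℝ := fun t z => deriv (fun s => f t s) z

/-- Smoothness of a field. -/
def Smo (f : ℝ → ℝ → ℝ) : Prop := ContDiff ℝ (⊤ : ℕ∞) (fun q : ℝ × ℝ => f q.1 q.2)

theorem Smo.hT {f : ℝ → ℝ → ℝ} (hf : Smo f) (t z : ℝ) :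
    HasDerivAt (fun s => f s z) (fderiv ℝ (fun q : ℝ × ℝ => f q.1 q.2) (t, z) (1, 0)) t := by
  have h1 : HasFDerivAt (fun q : ℝ × ℝ => f q.1 q.2) _ (t, z) :=
    (hf.differentiable (by simp) (t, z)).hasFDerivAt
  have h2 : HasDerivAt (fun s : ℝ => (s, z)) ((1 : ℝ), (0 : ℝ)) t :=
    (hasDerivAt_id t).prodMk (hasDerivAt_const t z)
  exact h1.comp_hasDerivAt t h2

theorem Smo.hZ {f : ℝ → ℝ → ℝ} (hf : Smo f) (t z : ℝ) :
    HasDerivAt (fun s => f t s) (fderiv ℝ (fun q : ℝ × ℝ => f q.1 q.2) (t, z) (0, 1)) z := by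
  have h1 : HasFDerivAt (fun q : ℝ × ℝ => f q.1 q.2) _ (t, z) :=
    (hf.differentiable (by simp) (t, z)).hasFDerivAt
  have h2 : HasDerivAt (fun s : ℝ => (t, s)) ((0 : ℝ), (1 : ℝ)) z :=
    (hasDerivAt_const z t).prodMk (hasDerivAt_id z)
  exact h1.comp_hasDerivAt z h2

theorem Smo.pT_eq {f : ℝ → ℝ → ℝ} (hf : Smo f) (t z : ℝ) :
    pT f t z = fderiv ℝ (fun q : ℝ × ℝ => f q.1 q.2) (t, z) (1, 0) := (hf.hT t z).deriv

theorem Smo.pZ_eq {f : ℝ → ℝ → ℝ} (hf : Smo f) (t z : ℝ) :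
    pZ f t z = fderiv ℝ (fun q : ℝ × ℝ => f q.1 q.2) (t, z) (0, 1) := (hf.hZ t z).deriv

theorem Smo.dT {f : ℝ → ℝ → ℝ} (hf : Smo f) (t z : ℝ) :
    HasDerivAt (fun s => f s z) (pT f t z) t := by
  rw [hf.pT_eq]; exact hf.hT t z

theorem Smo.dZ {f : ℝ → ℝ → ℝ} (hf : Smo f) (t z : ℝ) :
    HasDerivAt (fun s => f t s) (pZ f t z) z := by
  rw [hf.pZ_eq]; exact hf.hZ t z

theorem Smo.fd {f : ℝ → ℝ → ℝ} (hf : Smo f) :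
    ContDiff ℝ (⊤ : ℕ∞) (fderiv ℝ (fun q : ℝ × ℝ => f q.1 q.2)) :=
  ContDiff.fderiv_right (m := ((⊤ : ℕ∞) : WithTop ℕ∞)) hf (by simp)

theorem Smo.sT {f : ℝ → ℝ → ℝ} (hf : Smo f) : Smo (pT f) := by
  have h : (fun q : ℝ × ℝ => pT f q.1 q.2)
      = fun q => fderiv ℝ (fun q : ℝ × ℝ => f q.1 q.2) q (1, 0) := by
    ext q; exact hf.pT_eq q.1 q.2
  unfold Smo
  rw [h]
  exact hf.fd.clm_apply contDiff_const

theorem Smo.sZ {f : ℝ → ℝ → ℝ} (hf : Smo f) : Smo (pZ f) := by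
  have h : (fun q : ℝ × ℝ => pZ f q.1 q.2)
      = fun q => fderiv ℝ (fun q : ℝ × ℝ => f q.1 q.2) q (0, 1) := by
    ext q; exact hf.pZ_eq q.1 q.2
  unfold Smo
  rw [h]
  exact hf.fd.clm_apply contDiff_const

theorem Smo.comm {f : ℝ → ℝ → ℝ} (hf : Smo f) : pT (pZ f) = pZ (pT f) := by
  have hZ : (fun q : ℝ × ℝ => pZ f q.1 q.2)
      = fun q => fderiv ℝ (fun q : ℝ × ℝ => f q.1 q.2) q (0, 1) := by
    ext q; exact hf.pZ_eq q.1 q.2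
  have hT : (fun q : ℝ × ℝ => pT f q.1 q.2)
      = fun q => fderiv ℝ (fun q : ℝ × ℝ => f q.1 q.2) q (1, 0) := by
    ext q; exact hf.pT_eq q.1 q.2
  ext t z
  have hd := hf.fd.differentiable (by simp) (t, z)
  have hs : IsSymmSndFDerivAt ℝ (fun q : ℝ × ℝ => f q.1 q.2) (t, z) :=
    (ContDiff.contDiffAt hf).isSymmSndFDerivAt (by simp; exact WithTop.coe_le_coe.2 le_top)
  rw [hf.sZ.pT_eq, hf.sT.pZ_eq, hZ, hT, fderiv_clm_apply hd (by fun_prop),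
    fderiv_clm_apply hd (by fun_prop)]
  simpa using hs.eq (1, 0) (0, 1)

theorem Smo.cont {f : ℝ → ℝ → ℝ} (hf : Smo f) : Continuous (fun q : ℝ × ℝ => f q.1 q.2) :=
  ContDiff.continuous hf

theorem Smo.contZ {f : ℝ → ℝ → ℝ} (hf : Smo f) (t : ℝ) : Continuous (f t) :=
  hf.cont.comp (by fun_prop : Continuous fun z : ℝ => (t, z))

theorem Smo.leib {f : ℝ → ℝ → ℝ} (hf : Smo f) (a b t : ℝ) :
    HasDerivAt (fun τ => ∫ z in a..b, f τ z) (∫ z in a..b, pT f t z) t := by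
  obtain ⟨C, hC⟩ := ((isCompact_closedBall t 1).prod (isCompact_uIcc (a := a) (b := b))).exists_bound_of_continuousOn
    hf.sT.cont.continuousOn
  refine (intervalIntegral.hasDerivAt_integral_of_dominated_loc_of_deriv_le
    (F := f) (F' := pT f) (bound := fun _ => C) (Metric.closedBall_mem_nhds t one_pos)
    (Filter.Eventually.of_forall fun x => (hf.contZ x).aestronglyMeasurable)
    ((hf.contZ t).intervalIntegrable _ _) (hf.sT.contZ t).aestronglyMeasurable
    (Filter.Eventually.of_forall fun z hz x hx => hC (x, z) ⟨hx, Set.uIoc_subset_uIcc hz⟩)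
    (by simp) (Filter.Eventually.of_forall fun z _ x _ => hf.dT x z)).2

/-- power balance of the Euler–Bernoulli beam with distributed force
input and free ends. -/
theorem statement11 (ρA EI L : ℝ) (hρA : 0 < ρA) (hEI : 0 < EI) (hL : 0 < L)
    (f : ℝ → ℝ → ℝ) (hf : ContDiff ℝ (⊤ : ℕ∞) (fun q : ℝ × ℝ => f q.1 q.2))
    (w : ℝ → ℝ → ℝ) (hw : ContDiff ℝ (⊤ : ℕ∞) (fun q : ℝ × ℝ => w q.1 q.2))
    -- the beam equation `ρA ẅ = -EI w_[4] + f` on `[0,L]`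
    (hpde : ∀ t : ℝ, ∀ z ∈ Set.Icc (0:ℝ) L,
      ρA * pT (pT w) t z = -EI * pZ (pZ (pZ (pZ w))) t z + f t z)
    -- free-end boundary conditions
    (hbc : ∀ t : ℝ,
      pZ (pZ w) t 0 = 0 ∧ pZ (pZ (pZ w)) t 0 = 0
      ∧ pZ (pZ w) t L = 0 ∧ pZ (pZ (pZ w)) t L = 0)
    (t : ℝ) :
    HasDerivAt
      (fun τ => ∫ z in (0:ℝ)..L,
        (ρA / 2 * (pT w τ z) ^ 2 + EI / 2 * (pZ (pZ w) τ z) ^ 2))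
      (∫ z in (0:ℝ)..L, f t z * pT w t z) t := by
  have hw' : Smo w := hw
  have hf' : Smo f := hf
  have hv := hw'.sT
  have h2 := hw'.sZ.sZ
  have hE : Smo (fun τ z => ρA / 2 * (pT w τ z) ^ 2 + EI / 2 * (pZ (pZ w) τ z) ^ 2) := by
    have a : ContDiff ℝ (⊤ : ℕ∞) _ := hv
    have b : ContDiff ℝ (⊤ : ℕ∞) _ := h2
    exact (contDiff_const.mul (a.pow 2)).add (contDiff_const.mul (b.pow 2))
  have key := hE.leib 0 L t
  convert key using 1
  have hc : pT (pZ (pZ w)) = pZ (pZ (pT w)) := by rw [hw'.sZ.comm, hw'.comm]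
  have hFTC : ∫ z in (0:ℝ)..L, (pZ (pZ (pZ (pZ w))) t z * pT w t z
      - pZ (pZ w) t z * pZ (pZ (pT w)) t z) = 0 := by
    rw [intervalIntegral.integral_eq_sub_of_hasDerivAt
      (f := fun z => pZ (pZ (pZ w)) t z * pT w t z - pZ (pZ w) t z * pZ (pT w) t z)]
    · obtain ⟨b1, b2, b3, b4⟩ := hbc t
      simp [b1, b2, b3, b4]
    · intro z _
      have := ((h2.sZ.dZ t z).mul (hv.dZ t z)).sub ((h2.dZ t z).mul (hv.sZ.dZ t z))
      convert this using 1
      · rfl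
      · ring
    · exact (((h2.sZ.sZ.contZ t).mul (hv.contZ t)).sub
        ((h2.contZ t).mul (hv.sZ.sZ.contZ t))).intervalIntegrable _ _
  have hi1 : IntervalIntegrable (fun z => f t z * pT w t z) volume 0 L :=
    ((hf'.contZ t).mul (hv.contZ t)).intervalIntegrable _ _
  have hi2 : IntervalIntegrable (fun z => EI * (pZ (pZ (pZ (pZ w))) t z * pT w t z
      - pZ (pZ w) t z * pZ (pZ (pT w)) t z)) volume 0 L :=
    (continuous_const.mul (((h2.sZ.sZ.contZ t).mul (hv.contZ t)).sub
        ((h2.contZ t).mul (hv.sZ.sZ.contZ t)))).intervalIntegrable _ _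
  have hsub := intervalIntegral.integral_sub hi1 hi2
  rw [intervalIntegral.integral_const_mul, hFTC, mul_zero, sub_zero] at hsub
  rw [← hsub]
  apply intervalIntegral.integral_congr
  intro z hz
  rw [Set.uIcc_of_le hL.le] at hz
  have hd := (((hv.dT t z).pow 2).const_mul (ρA / 2)).add (((h2.dT t z).pow 2).const_mul (EI / 2))
  have hd' : pT (fun τ z => ρA / 2 * (pT w τ z) ^ 2 + EI / 2 * (pZ (pZ w) τ z) ^ 2) t z = _ :=
    hd.deriv
  have hp := hpde t z hz
  simp only [hd', hc]
  push_cast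
  linear_combination (-pT w t z) * hp
end

section
/- (Power balance of the pointwise actuated Euler–Bernoulli beam.) Let $\rho A, EI > 0$ be constants, $0 < A_1 < A_2 < L$, and let $u^1, u^2 : \mathbb{R}\to\mathbb{R}$. Let $w : \mathbb{R}\times[0,L]\to\mathbb{R}$ be such that $w$, $w_{[1]}$, $w_{[2]}$, $\dot{w}$ and $\dot{w}_{[1]}$ are continuous on $\mathbb{R}\times[0,L]$, $w$ is smooth on each of $\mathbb{R}\times[0,A_1]$, $\mathbb{R}\times[A_1,A_2]$, $\mathbb{R}\times[A_2,L]$ (derivatives one-sided at the interface points), $w$ satisfies $\rho A\,\ddot{w} = -EI\,w_{[4]}$ on each of the three subintervals, the free-end conditions $w_{[2]} = w_{[3]} = 0$ hold at $z=0$ and $z=L$, and the shear-force jump conditions $EI\big(w_{[3]}(t,A_i^+) - w_{[3]}(t,A_i^-)\big) = u^i(t)$ hold for $i=1,2$ and all $t$. Then the total energy $\mathscr{H}(t) = \int_0^L\Big(\frac{\rho A}{2}\dot{w}^2 + \frac{EI}{2}w_{[2]}^2\Big)dz$ satisfies $\frac{d\mathscr{H}}{dt}(t) = u^1(t)\,\dot{w}(t,A_1)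 + u^2(t)\,\dot{w}(t,A_2)$ for all $t$, i.e. the power ports of the beam with pointwise forces $u^1,u^2$ are the collocated pairs of point forces and point velocities at $z=A_1$ and $z=A_2$. -/
open MeasureTheory

/-- Spatial derivative within the set `S` (one-sided at the endpoints of `S`). -/
noncomputable def pZS (S : Set ℝ) (f : ℝ → ℝ → ℝ) : ℝ → ℝ → ℝ :=
  fun t z => derivWithin (fun s => f t s) S z

open Set in
theorem aux_ud {a b : ℝ} (h : a < b) : UniqueDiffOn ℝ ((univ : Set ℝ) ×ˢ Icc a b) :=
  uniqueDiffOn_univ.prod (uniqueDiffOn_Icc h)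

open Set in
theorem aux_pT_has {a b : ℝ} {f : ℝ → ℝ → ℝ}
    (hf : ContDiffOn ℝ (⊤ : ℕ∞) (fun q : ℝ × ℝ => f q.1 q.2) (univ ×ˢ Icc a b))
    (t z : ℝ) (hz : z ∈ Icc a b) :
    HasDerivAt (fun s => f s z)
      (fderivWithin ℝ (fun q : ℝ × ℝ => f q.1 q.2) (univ ×ˢ Icc a b) (t, z) (1, 0)) t := by
  have h1 := ((hf.differentiableOn (by simp)) (t, z) ⟨mem_univ _, hz⟩).hasFDerivWithinAt
  have h2 : HasDerivWithinAt (fun s : ℝ => ((s, z) : ℝ × ℝ)) ((1 : ℝ), (0 : ℝ)) univ t :=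
    ((hasDerivAt_id t).prodMk (hasDerivAt_const t z)).hasDerivWithinAt
  have h3 := h1.comp_hasDerivWithinAt_of_eq t h2 (fun s _ => ⟨mem_univ _, hz⟩) rfl
  exact hasDerivWithinAt_univ.1 h3

open Set in
theorem aux_pZ_has {a b : ℝ} {f : ℝ → ℝ → ℝ}
    (hf : ContDiffOn ℝ (⊤ : ℕ∞) (fun q : ℝ × ℝ => f q.1 q.2) (univ ×ˢ Icc a b))
    (t z : ℝ) (hz : z ∈ Icc a b) :
    HasDerivWithinAt (fun s => f t s)
      (fderivWithin ℝ (fun q : ℝ × ℝ => f q.1 q.2) (univ ×ˢ Icc a b) (t, z) (0, 1))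
      (Icc a b) z := by
  have h1 := ((hf.differentiableOn (by simp)) (t, z) ⟨mem_univ _, hz⟩).hasFDerivWithinAt
  have h2 : HasDerivWithinAt (fun s : ℝ => ((t, s) : ℝ × ℝ)) ((0 : ℝ), (1 : ℝ)) (Icc a b) z :=
    ((hasDerivAt_const z t).prodMk (hasDerivAt_id z)).hasDerivWithinAt
  exact h1.comp_hasDerivWithinAt_of_eq z h2 (fun s hs => ⟨mem_univ _, hs⟩) rfl

open Set in
theorem aux_pT_eq {a b : ℝ} {f : ℝ → ℝ → ℝ}
    (hf : ContDiffOn ℝ (⊤ : ℕ∞) (fun q : ℝ × ℝ => f q.1 q.2) (univ ×ˢ Icc a b))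
    (t z : ℝ) (hz : z ∈ Icc a b) :
    pT f t z =
      fderivWithin ℝ (fun q : ℝ × ℝ => f q.1 q.2) (univ ×ˢ Icc a b) (t, z) (1, 0) :=
  (aux_pT_has hf t z hz).deriv

open Set in
theorem aux_pZ_eq {a b : ℝ} (h : a < b) {f : ℝ → ℝ → ℝ}
    (hf : ContDiffOn ℝ (⊤ : ℕ∞) (fun q : ℝ × ℝ => f q.1 q.2) (univ ×ˢ Icc a b))
    (t z : ℝ) (hz : z ∈ Icc a b) :
    pZS (Icc a b) f t z =
      fderivWithin ℝ (fun q : ℝ × ℝ => f q.1 q.2) (univ ×ˢ Icc a b) (t, z) (0, 1) :=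
  (aux_pZ_has hf t z hz).derivWithin (uniqueDiffOn_Icc h z hz)

open Set in
theorem aux_fd {a b : ℝ} (h : a < b) {f : ℝ → ℝ → ℝ}
    (hf : ContDiffOn ℝ (⊤ : ℕ∞) (fun q : ℝ × ℝ => f q.1 q.2) (univ ×ˢ Icc a b)) :
    ContDiffOn ℝ (⊤ : ℕ∞)
      (fderivWithin ℝ (fun q : ℝ × ℝ => f q.1 q.2) (univ ×ˢ Icc a b)) (univ ×ˢ Icc a b) :=
  hf.fderivWithin (aux_ud h) (by simp)

open Set in
theorem aux_pT_sm {a b : ℝ} (h : a < b) {f : ℝ → ℝ → ℝ}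
    (hf : ContDiffOn ℝ (⊤ : ℕ∞) (fun q : ℝ × ℝ => f q.1 q.2) (univ ×ˢ Icc a b)) :
    ContDiffOn ℝ (⊤ : ℕ∞) (fun q : ℝ × ℝ => pT f q.1 q.2) (univ ×ˢ Icc a b) :=
  ((aux_fd h hf).clm_apply contDiffOn_const).congr fun q hq => aux_pT_eq hf q.1 q.2 hq.2

open Set in
theorem aux_pZ_sm {a b : ℝ} (h : a < b) {f : ℝ → ℝ → ℝ}
    (hf : ContDiffOn ℝ (⊤ : ℕ∞) (fun q : ℝ × ℝ => f q.1 q.2) (univ ×ˢ Icc a b)) :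
    ContDiffOn ℝ (⊤ : ℕ∞) (fun q : ℝ × ℝ => pZS (Icc a b) f q.1 q.2) (univ ×ˢ Icc a b) :=
  ((aux_fd h hf).clm_apply contDiffOn_const).congr fun q hq => aux_pZ_eq h hf q.1 q.2 hq.2

open Set in
theorem aux_snd {a b : ℝ} (h : a < b) {f g : ℝ → ℝ → ℝ} (v e : ℝ × ℝ)
    (hf : ContDiffOn ℝ (⊤ : ℕ∞) (fun q : ℝ × ℝ => f q.1 q.2) (univ ×ˢ Icc a b))
    (hg : ∀ t z, z ∈ Icc a b → g t z =
      fderivWithin ℝ (fun q : ℝ × ℝ => f q.1 q.2) (univ ×ˢ Icc a b) (t, z) v)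
    (t z : ℝ) (hz : z ∈ Icc a b) :
    fderivWithin ℝ (fun q : ℝ × ℝ => g q.1 q.2) (univ ×ˢ Icc a b) (t, z) e =
    fderivWithin ℝ (fderivWithin ℝ (fun q : ℝ × ℝ => f q.1 q.2) (univ ×ˢ Icc a b))
      (univ ×ˢ Icc a b) (t, z) e v := by
  have hm : (t, z) ∈ (univ : Set ℝ) ×ˢ Icc a b := ⟨mem_univ _, hz⟩
  have hd := ((aux_fd h hf).differentiableOn (by simp) (t, z) hm).hasFDerivWithinAt
  have h2 := hd.clm_apply (hasFDerivWithinAt_const v (t, z) _)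
  have h3 := h2.congr (f₁ := fun q : ℝ × ℝ => g q.1 q.2) (fun q hq => hg q.1 q.2 hq.2) (hg t z hz)
  rw [h3.fderivWithin (aux_ud h _ hm)]
  simp

open Set in
theorem aux_comm {a b : ℝ} (h : a < b) {f : ℝ → ℝ → ℝ}
    (hf : ContDiffOn ℝ (⊤ : ℕ∞) (fun q : ℝ × ℝ => f q.1 q.2) (univ ×ˢ Icc a b))
    (t z : ℝ) (hz : z ∈ Icc a b) :
    pT (pZS (Icc a b) f) t z = pZS (Icc a b) (pT f) t z := by
  have hm : (t, z) ∈ (univ : Set ℝ) ×ˢ Icc a b := ⟨mem_univ _, hz⟩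
  rw [aux_pT_eq (aux_pZ_sm h hf) t z hz, aux_pZ_eq h (aux_pT_sm h hf) t z hz,
    aux_snd h _ _ hf (aux_pZ_eq h hf) t z hz, aux_snd h _ _ hf (aux_pT_eq hf) t z hz]
  have hs : IsSymmSndFDerivWithinAt ℝ (fun q : ℝ × ℝ => f q.1 q.2) (univ ×ˢ Icc a b) (t, z) := by
    refine (hf (t, z) hm).isSymmSndFDerivWithinAt (by simp; exact WithTop.coe_le_coe.2 le_top) (aux_ud h) ?_ hm
    rw [interior_prod_eq, interior_univ, interior_Icc, closure_prod_eq, closure_univ,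
      closure_Ioo h.ne]
    exact hm
  exact hs _ _

open Set MeasureTheory in
theorem aux_under {a b : ℝ} (h : a < b) {G : ℝ → ℝ → ℝ}
    (hG : ContDiffOn ℝ (⊤ : ℕ∞) (fun q : ℝ × ℝ => G q.1 q.2) (univ ×ˢ Icc a b)) (t : ℝ) :
    HasDerivAt (fun τ => ∫ z in a..b, G τ z) (∫ z in a..b, pT G t z) t := by
  have hsl : ∀ {F : ℝ → ℝ → ℝ},
      ContDiffOn ℝ (⊤ : ℕ∞) (fun q : ℝ × ℝ => F q.1 q.2) (univ ×ˢ Icc a b) →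
      ∀ s, IntervalIntegrable (fun z => F s z) volume a b := by
    intro F hF s
    apply ContinuousOn.intervalIntegrable
    rw [uIcc_of_le h.le]
    exact hF.continuousOn.comp (f := fun z => (s, z)) (by fun_prop) (fun z hz => ⟨mem_univ _, hz⟩)
  have hT := aux_pT_sm h hG
  obtain ⟨C, hC⟩ := ((isCompact_Icc (a := t - 1) (b := t + 1)).prod
    (isCompact_Icc (a := a) (b := b))).exists_bound_of_continuousOn
    (hT.continuousOn.mono (prod_mono (subset_univ _) subset_rfl))
  refine (intervalIntegral.hasDerivAt_integral_of_dominated_loc_of_deriv_le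
    (F := G) (F' := pT G) (bound := fun _ => C) (s := Icc (t - 1) (t + 1))
    (Icc_mem_nhds (by linarith) (by linarith)) ?_ ?_ ?_ ?_ ?_ ?_).2
  · exact Filter.Eventually.of_forall fun s => (hsl hG s).def'.aestronglyMeasurable
  · exact hsl hG t
  · exact (hsl hT t).def'.aestronglyMeasurable
  · refine Filter.Eventually.of_forall fun z hz s hs => hC (s, z) ⟨hs, ?_⟩
    rw [uIoc_of_le h.le] at hz
    exact Ioc_subset_Icc_self hz
  · simp
  · refine Filter.Eventually.of_forall fun z hz s hs => ?_
    rw [uIoc_of_le h.le] at hz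
    have := aux_pT_has hG s z (Ioc_subset_Icc_self hz)
    exact this.differentiableAt.hasDerivAt

open Set MeasureTheory in
theorem aux_strip {a b ρA EI : ℝ} (h : a < b) {w : ℝ → ℝ → ℝ}
    (hw : ContDiffOn ℝ (⊤ : ℕ∞) (fun q : ℝ × ℝ => w q.1 q.2) (univ ×ˢ Icc a b))
    (hpde : ∀ t : ℝ, ∀ z ∈ Icc a b,
      ρA * pT (pT w) t z
        = -EI * pZS (Icc a b) (pZS (Icc a b) (pZS (Icc a b) (pZS (Icc a b) w))) t z) (t : ℝ) :
    HasDerivAt (fun τ => ∫ z in a..b, (ρA / 2 * (pT w τ z) ^ 2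
          + EI / 2 * (pZS (Icc a b) (pZS (Icc a b) w) τ z) ^ 2))
      (EI * (pZS (Icc a b) (pT w) t b * pZS (Icc a b) (pZS (Icc a b) w) t b
          - pT w t b * pZS (Icc a b) (pZS (Icc a b) (pZS (Icc a b) w)) t b)
       - EI * (pZS (Icc a b) (pT w) t a * pZS (Icc a b) (pZS (Icc a b) w) t a
          - pT w t a * pZS (Icc a b) (pZS (Icc a b) (pZS (Icc a b) w)) t a)) t := by
  have s1 := aux_pZ_sm h hw
  have s2 := aux_pZ_sm h s1
  have s3 := aux_pZ_sm h s2
  have s4 := aux_pZ_sm h s3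
  have v := aux_pT_sm h hw
  have v1 := aux_pZ_sm h v
  have v2 := aux_pZ_sm h v1
  have hc2 : ∀ z ∈ Icc a b, pT (pZS (Icc a b) (pZS (Icc a b) w)) t z
      = pZS (Icc a b) (pZS (Icc a b) (pT w)) t z := by
    intro z hz
    rw [aux_comm h s1 t z hz]
    exact derivWithin_congr (fun y hy => aux_comm h hw t y hy) (aux_comm h hw t z hz)
  have hG : ContDiffOn ℝ (⊤ : ℕ∞) (fun q : ℝ × ℝ =>
      (fun τ z => (ρA / 2 * (pT w τ z) ^ 2
          + EI / 2 * (pZS (Icc a b) (pZS (Icc a b) w) τ z) ^ 2)) q.1 q.2) (univ ×ˢ Icc a b) :=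
    (contDiffOn_const.mul (v.pow 2)).add (contDiffOn_const.mul (s2.pow 2))
  have key := aux_under (G := fun τ z => (ρA / 2 * (pT w τ z) ^ 2
          + EI / 2 * (pZS (Icc a b) (pZS (Icc a b) w) τ z) ^ 2)) h hG t
  convert key using 1
  have hDz : ∀ {f : ℝ → ℝ → ℝ},
      ContDiffOn ℝ (⊤ : ℕ∞) (fun q : ℝ × ℝ => f q.1 q.2) (univ ×ˢ Icc a b) →
      ∀ z ∈ Icc a b, HasDerivWithinAt (fun s => f t s) (pZS (Icc a b) f t z) (Icc a b) z :=
    fun hf z hz => (aux_pZ_has hf t z hz).differentiableWithinAt.hasDerivWithinAt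
  have hDt : ∀ {f : ℝ → ℝ → ℝ},
      ContDiffOn ℝ (⊤ : ℕ∞) (fun q : ℝ × ℝ => f q.1 q.2) (univ ×ˢ Icc a b) →
      ∀ z ∈ Icc a b, HasDerivAt (fun s => f s z) (pT f t z) t :=
    fun hf z hz => (aux_pT_has hf t z hz).differentiableAt.hasDerivAt
  have hpt : ∀ z ∈ Icc a b, pT (fun τ z => (ρA / 2 * (pT w τ z) ^ 2
          + EI / 2 * (pZS (Icc a b) (pZS (Icc a b) w) τ z) ^ 2)) t z
      = EI * (pZS (Icc a b) (pZS (Icc a b) (pT w)) t z * pZS (Icc a b) (pZS (Icc a b) w) t z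
        - pT w t z * pZS (Icc a b) (pZS (Icc a b) (pZS (Icc a b) (pZS (Icc a b) w))) t z) := by
    intro z hz
    have e := (((hDt v z hz).pow 2).const_mul (ρA / 2)).add
      (((hDt s2 z hz).pow 2).const_mul (EI / 2))
    have e2 := e.deriv
    refine Eq.trans e2 ?_
    rw [hc2 z hz]
    have := hpde t z hz
    simp only [Nat.cast_ofNat, Nat.add_one_sub_one, pow_one]
    linear_combination (pT w t z) * this
  have hFd : ∀ z ∈ Icc a b, HasDerivWithinAt
      (fun z => EI * (pZS (Icc a b) (pT w) t z * pZS (Icc a b) (pZS (Icc a b) w) t z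
          - pT w t z * pZS (Icc a b) (pZS (Icc a b) (pZS (Icc a b) w)) t z))
      (EI * (pZS (Icc a b) (pZS (Icc a b) (pT w)) t z * pZS (Icc a b) (pZS (Icc a b) w) t z
        - pT w t z * pZS (Icc a b) (pZS (Icc a b) (pZS (Icc a b) (pZS (Icc a b) w))) t z))
      (Icc a b) z := by
    intro z hz
    have := (((hDz v1 z hz).mul (hDz s2 z hz)).sub ((hDz v z hz).mul (hDz s3 z hz))).const_mul EI
    refine this.congr_deriv ?_
    ring
  rw [intervalIntegral.integral_congr (g := fun z => _) (fun z hz => hpt z (by rwa [uIcc_of_le h.le] at hz))]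
  symm
  refine intervalIntegral.integral_eq_sub_of_hasDerivAt_of_le
    (f := fun z => EI * (pZS (Icc a b) (pT w) t z * pZS (Icc a b) (pZS (Icc a b) w) t z
          - pT w t z * pZS (Icc a b) (pZS (Icc a b) (pZS (Icc a b) w)) t z)) h.le
    (fun z hz => (hFd z hz).continuousWithinAt)
    (fun z hz => (hFd z (Ioo_subset_Icc_self hz)).hasDerivAt (Icc_mem_nhds hz.1 hz.2)) ?_
  apply ContinuousOn.intervalIntegrable
  rw [uIcc_of_le h.le]
  have hsl : ∀ {F : ℝ → ℝ → ℝ},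
      ContDiffOn ℝ (⊤ : ℕ∞) (fun q : ℝ × ℝ => F q.1 q.2) (univ ×ˢ Icc a b) →
      ContinuousOn (fun z => F t z) (Icc a b) := fun hF =>
    hF.continuousOn.comp (f := fun z => (t, z)) (by fun_prop) (fun z hz => ⟨mem_univ _, hz⟩)
  exact continuousOn_const.mul (((hsl v2).mul (hsl s2)).sub ((hsl v).mul (hsl s4)))

open Set Filter Topology in
theorem aux_local {a b c d : ℝ} (hca : c ≤ a) (hbd : b ≤ d) (w : ℝ → ℝ → ℝ) (t z : ℝ)
    (hz : z ∈ Ioo a b) :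
    pZS (Icc c d) (pZS (Icc c d) w) t z = pZS (Icc a b) (pZS (Icc a b) w) t z := by
  have h0 : ∀ (f : ℝ → ℝ) (y : ℝ), y ∈ Ioo a b →
      derivWithin f (Icc c d) y = derivWithin f (Icc a b) y := by
    intro f y hy
    rw [derivWithin_of_mem_nhds (Icc_mem_nhds hy.1 hy.2),
      derivWithin_of_mem_nhds (Icc_mem_nhds (hca.trans_lt hy.1) (hy.2.trans_le hbd))]
  unfold pZS
  rw [h0 _ z hz]
  apply Filter.EventuallyEq.derivWithin_eq_of_nhds
  filter_upwards [Ioo_mem_nhds hz.1 hz.2] with y hy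
  exact h0 _ y hy

open Set MeasureTheory in
theorem aux_int {a b c d ρA EI : ℝ} (h : a < b) (hca : c ≤ a) (hbd : b ≤ d) {w : ℝ → ℝ → ℝ}
    (hw : ContDiffOn ℝ (⊤ : ℕ∞) (fun q : ℝ × ℝ => w q.1 q.2) (univ ×ˢ Icc a b)) (τ : ℝ) :
    IntervalIntegrable (fun z => (ρA / 2 * (pT w τ z) ^ 2
          + EI / 2 * (pZS (Icc c d) (pZS (Icc c d) w) τ z) ^ 2)) volume a b ∧
    ∫ z in a..b, (ρA / 2 * (pT w τ z) ^ 2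
          + EI / 2 * (pZS (Icc c d) (pZS (Icc c d) w) τ z) ^ 2) =
    ∫ z in a..b, (ρA / 2 * (pT w τ z) ^ 2
          + EI / 2 * (pZS (Icc a b) (pZS (Icc a b) w) τ z) ^ 2) := by
  have s2 := aux_pZ_sm h (aux_pZ_sm h hw)
  have v := aux_pT_sm h hw
  have hsl : ∀ {F : ℝ → ℝ → ℝ},
      ContDiffOn ℝ (⊤ : ℕ∞) (fun q : ℝ × ℝ => F q.1 q.2) (univ ×ˢ Icc a b) →
      ContinuousOn (fun z => F τ z) (Icc a b) := fun hF =>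
    hF.continuousOn.comp (f := fun z => (τ, z)) (by fun_prop) (fun z hz => ⟨mem_univ _, hz⟩)
  have hI : IntervalIntegrable (fun z => (ρA / 2 * (pT w τ z) ^ 2
          + EI / 2 * (pZS (Icc a b) (pZS (Icc a b) w) τ z) ^ 2)) volume a b := by
    apply ContinuousOn.intervalIntegrable
    rw [uIcc_of_le h.le]
    exact (continuousOn_const.mul ((hsl v).pow 2)).add (continuousOn_const.mul ((hsl s2).pow 2))
  have hae : ∀ᵐ z ∂volume, z ∈ uIoc a b → (ρA / 2 * (pT w τ z) ^ 2
          + EI / 2 * (pZS (Icc c d) (pZS (Icc c d) w) τ z) ^ 2) = (ρA / 2 * (pT w τ z) ^ 2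
          + EI / 2 * (pZS (Icc a b) (pZS (Icc a b) w) τ z) ^ 2) := by
    filter_upwards [Measure.ae_ne volume b] with z hzb hz
    rw [uIoc_of_le h.le] at hz
    rw [aux_local hca hbd w τ z ⟨hz.1, lt_of_le_of_ne hz.2 hzb⟩]
  refine ⟨?_, intervalIntegral.integral_congr_ae hae⟩
  refine hI.congr_ae ?_
  rw [Filter.EventuallyEq, ae_restrict_iff' measurableSet_uIoc]
  filter_upwards [hae] with z hz hm using (hz hm).symm

/-- power balance of the pointwise actuated Euler–Bernoulli beam:
the power ports are the collocated pairs of point forces and point velocities at the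
actuation points `A₁, A₂`. -/
theorem statement12 (ρA EI L A1 A2 : ℝ) (hρA : 0 < ρA) (hEI : 0 < EI)
    (hA1 : 0 < A1) (hA12 : A1 < A2) (hA2L : A2 < L)
    (u1 u2 : ℝ → ℝ)
    (w : ℝ → ℝ → ℝ)
    -- `w` is smooth on each of the three strips
    (hw1 : ContDiffOn ℝ (⊤ : ℕ∞) (fun q : ℝ × ℝ => w q.1 q.2) (Set.univ ×ˢ Set.Icc 0 A1))
    (hw2 : ContDiffOn ℝ (⊤ : ℕ∞) (fun q : ℝ × ℝ => w q.1 q.2) (Set.univ ×ˢ Set.Icc A1 A2))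
    (hw3 : ContDiffOn ℝ (⊤ : ℕ∞) (fun q : ℝ × ℝ => w q.1 q.2) (Set.univ ×ˢ Set.Icc A2 L))
    -- `w` and `ẇ` are continuous on `ℝ × [0,L]`
    (hwc : ContinuousOn (fun q : ℝ × ℝ => w q.1 q.2) (Set.univ ×ˢ Set.Icc 0 L))
    (hwtc : ContinuousOn (fun q : ℝ × ℝ => pT w q.1 q.2) (Set.univ ×ˢ Set.Icc 0 L))
    -- `w_[1]`, `w_[2]` and `ẇ_[1]` are continuous across the interface points
    (hw1c : ∀ t : ℝ,
      pZS (Set.Icc 0 A1) w t A1 = pZS (Set.Icc A1 A2) w t A1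
      ∧ pZS (Set.Icc A1 A2) w t A2 = pZS (Set.Icc A2 L) w t A2)
    (hw2c : ∀ t : ℝ,
      pZS (Set.Icc 0 A1) (pZS (Set.Icc 0 A1) w) t A1
        = pZS (Set.Icc A1 A2) (pZS (Set.Icc A1 A2) w) t A1
      ∧ pZS (Set.Icc A1 A2) (pZS (Set.Icc A1 A2) w) t A2
        = pZS (Set.Icc A2 L) (pZS (Set.Icc A2 L) w) t A2)
    (hwt1c : ∀ t : ℝ,
      pZS (Set.Icc 0 A1) (pT w) t A1 = pZS (Set.Icc A1 A2) (pT w) t A1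
      ∧ pZS (Set.Icc A1 A2) (pT w) t A2 = pZS (Set.Icc A2 L) (pT w) t A2)
    -- the beam equation `ρA ẅ = -EI w_[4]` on each of the three subintervals
    (hpde1 : ∀ t : ℝ, ∀ z ∈ Set.Icc (0:ℝ) A1,
      ρA * pT (pT w) t z
        = -EI * pZS (Set.Icc 0 A1) (pZS (Set.Icc 0 A1)
            (pZS (Set.Icc 0 A1) (pZS (Set.Icc 0 A1) w))) t z)
    (hpde2 : ∀ t : ℝ, ∀ z ∈ Set.Icc A1 A2,
      ρA * pT (pT w) t z
        = -EI * pZS (Set.Icc A1 A2) (pZS (Set.Icc A1 A2)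
            (pZS (Set.Icc A1 A2) (pZS (Set.Icc A1 A2) w))) t z)
    (hpde3 : ∀ t : ℝ, ∀ z ∈ Set.Icc A2 L,
      ρA * pT (pT w) t z
        = -EI * pZS (Set.Icc A2 L) (pZS (Set.Icc A2 L)
            (pZS (Set.Icc A2 L) (pZS (Set.Icc A2 L) w))) t z)
    -- free-end conditions `w_[2] = w_[3] = 0` at `z = 0` and `z = L`
    (hbc : ∀ t : ℝ,
      pZS (Set.Icc 0 A1) (pZS (Set.Icc 0 A1) w) t 0 = 0
      ∧ pZS (Set.Icc 0 A1) (pZS (Set.Icc 0 A1) (pZS (Set.Icc 0 A1) w)) t 0 = 0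
      ∧ pZS (Set.Icc A2 L) (pZS (Set.Icc A2 L) w) t L = 0
      ∧ pZS (Set.Icc A2 L) (pZS (Set.Icc A2 L) (pZS (Set.Icc A2 L) w)) t L = 0)
    -- the shear-force jump conditions `EI (w_[3](t,Aᵢ⁺) - w_[3](t,Aᵢ⁻)) = uⁱ(t)`
    (hjump1 : ∀ t : ℝ,
      EI * (pZS (Set.Icc A1 A2) (pZS (Set.Icc A1 A2) (pZS (Set.Icc A1 A2) w)) t A1
        - pZS (Set.Icc 0 A1) (pZS (Set.Icc 0 A1) (pZS (Set.Icc 0 A1) w)) t A1) = u1 t)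
    (hjump2 : ∀ t : ℝ,
      EI * (pZS (Set.Icc A2 L) (pZS (Set.Icc A2 L) (pZS (Set.Icc A2 L) w)) t A2
        - pZS (Set.Icc A1 A2) (pZS (Set.Icc A1 A2) (pZS (Set.Icc A1 A2) w)) t A2) = u2 t)
    (t : ℝ) :
    HasDerivAt
      (fun τ => ∫ z in (0:ℝ)..L,
        (ρA / 2 * (pT w τ z) ^ 2
          + EI / 2 * (pZS (Set.Icc 0 L) (pZS (Set.Icc 0 L) w) τ z) ^ 2))
      (u1 t * pT w t A1 + u2 t * pT w t A2) t := by
  have d1 := aux_strip hA1 hw1 hpde1 t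
  have d2 := aux_strip hA12 hw2 hpde2 t
  have d3 := aux_strip hA2L hw3 hpde3 t
  have D := (d1.add d2).add d3
  refine (D.congr_of_eventuallyEq (Filter.Eventually.of_forall fun τ => ?_)).congr_deriv ?_
  · obtain ⟨i1, e1⟩ := aux_int (ρA := ρA) (EI := EI) (c := 0) (d := L) hA1 le_rfl
      (hA12.trans hA2L).le hw1 τ
    obtain ⟨i2, e2⟩ := aux_int (ρA := ρA) (EI := EI) (c := 0) (d := L) hA12 hA1.le hA2L.le hw2 τ
    obtain ⟨i3, e3⟩ := aux_int (ρA := ρA) (EI := EI) (c := 0) (d := L) hA2L (hA1.trans hA12).le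
      le_rfl hw3 τ
    simp only [Pi.add_apply]
    rw [← e1, ← e2, ← e3, intervalIntegral.integral_add_adjacent_intervals i1 i2,
      intervalIntegral.integral_add_adjacent_intervals (i1.trans i2) i3]
  · obtain ⟨b1, b2, b3, b4⟩ := hbc t
    obtain ⟨c1, c2⟩ := hw2c t
    obtain ⟨f1, f2⟩ := hwt1c t
    rw [← hjump1 t, ← hjump2 t, b1, b2, b3, b4, c1, c2, f1, f2]
    ring
end
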